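/- For a smooth solution of D_t u + 𝒯∇p = (∇u)·u with div u = Δ𝒯, the divergence satisfies D_t(div u) + 𝒯Δp = -(∇𝒯)·∇p - (∇_e u)·∇u^e, and combining with D_t𝒯 = 𝒯Δ𝒯 yields the parabolic-type equation D_t(div u) - 𝒯Δ(div u) = -(Δu^e)∇_e𝒯 - 2g^{ab}(∇_e∇_a𝒯)∇_b u^e + (div u)² + 2g^{ab}(∇_a𝒯)∇_b(div u). -/

import Mathlib

/-!
The induced metric is flat: `x t` is, for each `t`, a local diffeomorphism (`hdet`) and `g` is the
pull-back of the Euclidean metric. Writing `J^i_a = ∂_a x^i` and `K = J⁻¹`, the vector fields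
`∂_i = K^a_i ∂_a` form an orthonormal frame; it is the Euclidean coordinate frame seen in Lagrangian
coordinates, so it is parallel. If `w_b = J^j_b W_j` then `∇_a w_b = J^j_b ∂_a W_j` (`cov1`,
`cov2`), and all contractions with `g⁻¹ = K Kᵀ` become Euclidean ones (`contr_vec`, `contr_ten`,
`contr_ten2`, `contr_hess`, `contr_three`). With `V^j = D_t x^j` the velocity is `u_b = J^j_b V_j`,
so that `div u = ∂_j V_j` and the Laplace-Beltrami operator is `∂_i ∂_i`.

Two commutators carry the computation: `[∂_i, ∂_j] = 0` (`fr_comm`) and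
`[D_t, ∂_i] = -(∂_i V^k) ∂_k` (`D_fr`). Both brackets are combinations of the `∂_a`, hence of the
`∂_k`, and their coefficients are found by applying them to the functions `x^k`. The momentum
equation becomes `D_t V_j = -𝒯 ∂_j p` (`mom`), since `D_t J^j_a V_j` cancels `(∇_a u_c) u^c`. Then
`D_div` expands `D_t (∂_j V_j)`, and `D_lap` expands `D_t` of `div u = ∂_i ∂_i 𝒯` with
`D_t 𝒯 = 𝒯 div u`.

The algebra takes place in an arbitrary commutative algebra with derivations `D` and `P a`. It is
applied to the algebra `Sm n` of smooth functions on spacetime with `D = ∂_t` and `P a = ∂_a`, and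
the homomorphisms `ev q`, evaluation at a point, translate the result back into the coordinate
expressions of the statement.
-/

noncomputable section

/-- `(0,r)`-tensor fields on `ℝⁿ` (in Lagrangian coordinates). -/
abbrev Tens (n r : ℕ) := (Fin n → ℝ) → (Fin r → Fin n) → ℝ

/-- Partial derivative in the `a`-th coordinate direction. -/
def pd {n : ℕ} (a : Fin n) (f : (Fin n → ℝ) → ℝ) (y : Fin n → ℝ) : ℝ :=
  fderiv ℝ f y (Pi.single a 1)

/-- Christoffel symbols `Γ^c_{ab}` of a (time-dependent) metric `g`. -/
def Gamma {n : ℕ} (g : ℝ → (Fin n → ℝ) → Matrix (Fin n) (Fin n) ℝ) (t : ℝ)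
    (y : Fin n → ℝ) (c a b : Fin n) : ℝ :=
  (1 / 2) * ∑ d, (g t y)⁻¹ c d *
    (pd a (fun z => g t z b d) y + pd b (fun z => g t z a d) y -
      pd d (fun z => g t z a b) y)

/-- Covariant derivative of a `(0,r)` tensor: the new (covariant) index comes first. -/
def covD {n : ℕ} (g : ℝ → (Fin n → ℝ) → Matrix (Fin n) (Fin n) ℝ) (t : ℝ) {r : ℕ}
    (w : Tens n r) : Tens n (r + 1) :=
  fun y J =>
    pd (J 0) (fun z => w z (Fin.tail J)) y -
      ∑ m : Fin r, ∑ e : Fin n,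
        Gamma g t y e (J 0) (Fin.tail J m) * w y (Function.update (Fin.tail J) m e)

/-- The metric `g_{ab} = δ_{ij} (∂x^i/∂y^a)(∂x^j/∂y^b)` induced by the flow map `x`. -/
def gmat {n : ℕ} (x : ℝ → (Fin n → ℝ) → (Fin n → ℝ)) (t : ℝ) (y : Fin n → ℝ) :
    Matrix (Fin n) (Fin n) ℝ :=
  Matrix.of fun a b => ∑ i, pd a (fun z => x t z i) y * pd b (fun z => x t z i) y

/-- The Lagrangian velocity one-form `u_a = (∂x^j/∂y^a) v_j(t, x(t,y))`. -/
def uLag {n : ℕ} (x v : ℝ → (Fin n → ℝ) → (Fin n → ℝ)) (t : ℝ) (y : Fin n → ℝ)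
    (a : Fin n) : ℝ :=
  ∑ j, pd a (fun z => x t z j) y * v t (x t y) j

/-- `u` as a `(0,1)` tensor. -/
def uT {n : ℕ} (x v : ℝ → (Fin n → ℝ) → (Fin n → ℝ)) (t : ℝ) : Tens n 1 :=
  fun y I => uLag x v t y (I 0)

/-- The deformation tensor `h_{ab} = (∇_a u_b + ∇_b u_a)/2`. -/
def hT {n : ℕ} (x v : ℝ → (Fin n → ℝ) → (Fin n → ℝ)) (t : ℝ) (y : Fin n → ℝ)
    (a b : Fin n) : ℝ :=
  (covD (gmat x) t (uT x v t) y ![a, b] + covD (gmat x) t (uT x v t) y ![b, a]) / 2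

/-- `div u = g^{ab} ∇_a u_b`. -/
def divu {n : ℕ} (x v : ℝ → (Fin n → ℝ) → (Fin n → ℝ)) (t : ℝ) (y : Fin n → ℝ) : ℝ :=
  ∑ a, ∑ b, (gmat x t y)⁻¹ a b * covD (gmat x) t (uT x v t) y ![a, b]


/-- A scalar as a `(0,0)` tensor. -/
def scalT {n : ℕ} (f : (Fin n → ℝ) → ℝ) : Tens n 0 := fun y _ => f y

/-- Laplace–Beltrami operator `Δf = g^{cd} ∇_c∇_d f`. -/
def lapB {n : ℕ} (g : ℝ → (Fin n → ℝ) → Matrix (Fin n) (Fin n) ℝ) (t : ℝ)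
    (f : (Fin n → ℝ) → ℝ) (y : Fin n → ℝ) : ℝ :=
  ∑ c, ∑ d, (g t y)⁻¹ c d * covD g t (covD g t (scalT f)) y ![c, d]

/-! ### The frame and its commutators -/

section
variable {A : Type*} [CommRing A] [Algebra ℝ A] {n : ℕ}

/-- The frame field `∂_i = K^a_i ∂_a`, as a derivation. -/
def fr (P : Fin n → Derivation ℝ A A) (K : Matrix (Fin n) (Fin n) A) (i : Fin n) :
    Derivation ℝ A A := ∑ a, K a i • P a

theorem fr_apply (P : Fin n → Derivation ℝ A A) (K : Matrix (Fin n) (Fin n) A) (i : Fin n) (f : A) :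
    fr P K i f = ∑ a, K a i * P a f := by
  have h := congrFun (map_sum (Derivation.coeFnAddMonoidHom : Derivation ℝ A A →+ (A → A))
    (fun a => K a i • P a) Finset.univ) f
  rw [Finset.sum_apply] at h
  exact h
/-- The Jacobian `J^i_a = ∂_a x^i`, with the frame index `i` as row. -/
def jac (P : Fin n → Derivation ℝ A A) (X : Fin n → A) : Matrix (Fin n) (Fin n) A :=
  Matrix.of fun i a => P a (X i)

variable {D : Derivation ℝ A A} {P : Fin n → Derivation ℝ A A} {X : Fin n → A}
  {K : Matrix (Fin n) (Fin n) A}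

theorem JK_sum (hJK : jac P X * K = 1) (i k : Fin n) : ∑ a, P a (X i) * K a k = if i = k then 1 else 0 := by
  have := congrFun (congrFun hJK i) k
  simpa [Matrix.mul_apply, jac, Matrix.one_apply] using this

theorem KJ_sum (hJK : jac P X * K = 1) (a b : Fin n) : ∑ i, K a i * P b (X i) = if a = b then 1 else 0 := by
  have h : K * jac P X = 1 := mul_eq_one_comm.mp hJK
  have := congrFun (congrFun h a) b
  simpa [Matrix.mul_apply, jac, Matrix.one_apply] using this

theorem fr_X (hJK : jac P X * K = 1) (i k : Fin n) : fr P K i (X k) = if k = i then 1 else 0 := by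
  rw [fr_apply, ← JK_sum hJK]
  exact Finset.sum_congr rfl fun a _ => mul_comm _ _

theorem P_eq (hJK : jac P X * K = 1) (a : Fin n) (f : A) : P a f = ∑ i, P a (X i) * fr P K i f := by
  simp only [fr_apply, Finset.mul_sum]
  rw [Finset.sum_comm]
  have : ∀ b, ∑ i, P a (X i) * (K b i * P b f) = (if b = a then 1 else 0) * P b f := by
    intro b
    rw [← KJ_sum hJK, Finset.sum_mul]
    exact Finset.sum_congr rfl fun i _ => by ring
  simp [this]

/-- A combination of the `∂_a` is a combination of the `∂_k` whose coefficients are its values on the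
coordinate functions `x^k`. -/
theorem span_eq (hJK : jac P X * K = 1) (c : Fin n → A) (f : A) :
    ∑ a, c a * P a f = ∑ k, (∑ a, c a * P a (X k)) * fr P K k f := by
  simp only [Finset.sum_mul]
  rw [Finset.sum_comm]
  refine Finset.sum_congr rfl fun a _ => ?_
  rw [P_eq hJK a f, Finset.mul_sum]
  exact Finset.sum_congr rfl fun i _ => by ring

/-- The commutator `[D, ∂_i] = -(∂_i V^k) ∂_k` with `V^k = D x^k`. -/
theorem D_fr (hJK : jac P X * K = 1) (hDP : ∀ a f, D (P a f) = P a (D f)) (i : Fin n) (f : A) :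
    D (fr P K i f) = fr P K i (D f) - ∑ k, fr P K i (D (X k)) * fr P K k f := by
  have key : ∀ f, D (fr P K i f) - fr P K i (D f) = ∑ a, D (K a i) * P a f := by
    intro f
    simp only [fr_apply, map_sum, Derivation.leibniz, smul_eq_mul, hDP, ← Finset.sum_sub_distrib]
    exact Finset.sum_congr rfl fun i _ => by ring
  have key2 : ∀ k, ∑ a, D (K a i) * P a (X k) = - fr P K i (D (X k)) := by
    intro k
    rw [← key, fr_X hJK]
    split_ifs <;> simp
  have := key f
  rw [span_eq hJK] at this
  simp only [key2, neg_mul, Finset.sum_neg_distrib] at this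
  linear_combination this

/-- The frame fields commute: their bracket is a combination of the `∂_k` and kills every `x^k`. -/
theorem fr_comm (hJK : jac P X * K = 1) (hP : ∀ a b f, P a (P b f) = P b (P a f)) (i j : Fin n) (f : A) :
    fr P K i (fr P K j f) = fr P K j (fr P K i f) := by
  have e : ∀ i j f, fr P K i (fr P K j f) =
      ∑ a, fr P K i (K a j) * P a f + ∑ a, ∑ b, K a j * K b i * P a (P b f) := by
    intro i j f
    conv_lhs => rw [fr_apply P K j]
    simp only [map_sum, Derivation.leibniz, smul_eq_mul, ← Finset.sum_add_distrib]
    refine Finset.sum_congr rfl fun a _ => ?_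
    rw [fr_apply P K i (P a f), Finset.mul_sum, add_comm, mul_comm]
    congr 1
    exact Finset.sum_congr rfl fun b _ => by rw [hP a b]; ring
  have key : ∀ f, fr P K i (fr P K j f) - fr P K j (fr P K i f) =
      ∑ a, (fr P K i (K a j) - fr P K j (K a i)) * P a f := by
    intro f
    rw [e i j, e j i, Finset.sum_comm (f := fun a b => K a i * K b j * P a (P b f))]
    simp only [sub_mul, Finset.sum_sub_distrib]
    have : ∑ a, ∑ b, K a j * K b i * P a (P b f) = ∑ y, ∑ x, K x i * K y j * P x (P y f) :=
      Finset.sum_congr rfl fun a _ => Finset.sum_congr rfl fun b _ => by rw [hP a b]; ring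
    rw [this]; ring
  have := key f
  rw [span_eq hJK] at this
  simp only [← key, fr_X hJK] at this
  have h0 : ∀ k, fr P K i (if k = j then 1 else 0) - fr P K j (if k = i then 1 else 0) = 0 := by
    intro k; split_ifs <;> simp
  simp only [h0, zero_mul, Finset.sum_const_zero] at this
  exact sub_eq_zero.mp this

/-- The first equation, in the frame. -/
theorem D_div (hJK : jac P X * K = 1) (hDP : ∀ a f, D (P a f) = P a (D f)) {T p : A}
    (hm : ∀ j, D (D (X j)) = - (T * fr P K j p)) :
    D (∑ j, fr P K j (D (X j))) + T * ∑ j, fr P K j (fr P K j p) =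
      - ∑ j, fr P K j T * fr P K j p - ∑ i, ∑ j, fr P K i (D (X j)) * fr P K j (D (X i)) := by
  simp only [map_sum, D_fr hJK hDP, hm, map_neg, Derivation.leibniz, smul_eq_mul,
    Finset.sum_sub_distrib, Finset.mul_sum, Finset.sum_neg_distrib, Finset.sum_add_distrib, neg_add]
  have : ∑ j, fr P K j p * fr P K j T = ∑ j, fr P K j T * fr P K j p :=
    Finset.sum_congr rfl fun a _ => mul_comm _ _
  rw [this]; ring

/-- The parabolic equation, in the frame. -/
theorem D_lap (hJK : jac P X * K = 1) (hDP : ∀ a f, D (P a f) = P a (D f))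
    (hP : ∀ a b f, P a (P b f) = P b (P a f)) {T δ : A}
    (hδ : δ = ∑ j, fr P K j (fr P K j T)) (hT : D T = T * δ) :
    D δ - T * ∑ j, fr P K j (fr P K j δ) =
      - ∑ k, (∑ i, fr P K i (fr P K i (D (X k)))) * fr P K k T
      - 2 * ∑ i, ∑ j, fr P K i (fr P K j T) * fr P K j (D (X i))
      + δ ^ 2 + 2 * ∑ j, fr P K j T * fr P K j δ := by
  have e : ∀ i, D (fr P K i (fr P K i T)) =
      δ * fr P K i (fr P K i T) + 2 * (fr P K i T * fr P K i δ) + T * fr P K i (fr P K i δ)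
      - ∑ k, fr P K i (fr P K i (D (X k))) * fr P K k T
      - 2 * ∑ k, fr P K k (fr P K i T) * fr P K i (D (X k)) := by
    intro i
    have h1 : ∑ k, fr P K i (D (X k)) * fr P K k (fr P K i T)
      = ∑ k, fr P K k (fr P K i T) * fr P K i (D (X k)) :=
      Finset.sum_congr rfl fun a _ => mul_comm _ _
    have h2 : fr P K i (∑ k, fr P K i (D (X k)) * fr P K k T) = 
      ∑ k, fr P K i (fr P K i (D (X k))) * fr P K k T
      + ∑ k, fr P K k (fr P K i T) * fr P K i (D (X k)) := by
      simp only [map_sum, Derivation.leibniz, smul_eq_mul, ← Finset.sum_add_distrib]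
      exact Finset.sum_congr rfl fun a _ => by rw [fr_comm hJK hP i a]; ring
    rw [D_fr hJK hDP, D_fr hJK hDP, hT, h1, map_sub, h2]
    simp only [map_add, Derivation.leibniz, smul_eq_mul]
    ring
  conv_lhs => rw [hδ, map_sum]; simp only [← hδ]
  simp only [e, Finset.sum_add_distrib, Finset.sum_sub_distrib, ← Finset.mul_sum, ← hδ, Finset.sum_mul]
  rw [Finset.sum_comm (f := fun i k => fr P K k (fr P K i T) * fr P K i (D (X k))), 
    Finset.sum_comm (f := fun i k => fr P K i (fr P K i (D (X k))) * fr P K k T)]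
  ring

/-! ### Contractions and covariant derivatives in the frame -/

/-- The inverse metric `g^{ab} = K^a_i K^b_i`. -/
def GI (K : Matrix (Fin n) (Fin n) A) (a b : Fin n) : A := ∑ i, K a i * K b i

theorem GI_J (hJK : jac P X * K = 1) (a k : Fin n) : ∑ b, GI K a b * P b (X k) = K a k := by
  simp only [GI, Finset.sum_mul]
  rw [Finset.sum_comm]
  have : ∀ i, ∑ b, K a i * K b i * P b (X k) = K a i * (if k = i then 1 else 0) := by
    intro i
    rw [← JK_sum hJK, Finset.mul_sum]
    exact Finset.sum_congr rfl fun b _ => by ring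
  simp [this]

set_option linter.unusedSectionVars false in
theorem GI_symm (a b : Fin n) : GI K a b = GI K b a :=
  Finset.sum_congr rfl fun _ _ => mul_comm _ _

/-- Raising the index of the one-form `J^k_b W_k`. -/
theorem contr1 (hJK : jac P X * K = 1) (W : Fin n → A) (a : Fin n) :
    ∑ b, GI K a b * ∑ k, P b (X k) * W k = ∑ k, K a k * W k := by
  simp only [← GI_J hJK, Finset.mul_sum, Finset.sum_mul]
  rw [Finset.sum_comm]
  exact Finset.sum_congr rfl fun _ _ => Finset.sum_congr rfl fun _ _ => by ring

/-- The inner product `g^{ab} ∇_a f ∇_b h`. -/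
theorem contr_vec (hJK : jac P X * K = 1) (f h : A) :
    ∑ a, ∑ b, GI K a b * P a f * P b h = ∑ k, fr P K k f * fr P K k h := by
  have : ∀ a, ∑ b, GI K a b * P a f * P b h = ∑ k, K a k * P a f * fr P K k h := by
    intro a
    have := contr1 hJK (fun k => fr P K k h) a
    simp only [← P_eq hJK] at this
    calc _ = P a f * ∑ b, GI K a b * P b h := by
          rw [Finset.mul_sum]; exact Finset.sum_congr rfl fun b _ => by ring
      _ = _ := by rw [this, Finset.mul_sum]; exact Finset.sum_congr rfl fun b _ => by ring
  simp only [this]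
  rw [Finset.sum_comm]
  simp only [← Finset.sum_mul, fr_apply P K _ f]

/-- The 2-tensor `J^j_b ∂_a W_j`, which is the covariant derivative `∇_a w_b` of the one-form
`w_b = J^j_b W_j`. -/
def ten (P : Fin n → Derivation ℝ A A) (X : Fin n → A) (W : Fin n → A) : Matrix (Fin n) (Fin n) A :=
  Matrix.of fun a b => ∑ j, P b (X j) * P a (W j)

theorem ten_eq (hJK : jac P X * K = 1) (W : Fin n → A) : ten P X W =
    (jac P X).transpose * (Matrix.of fun i j => fr P K i (W j)) * jac P X := by
  ext a b
  simp only [ten, Matrix.mul_apply, Matrix.of_apply, Matrix.transpose_apply, jac]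
  refine Finset.sum_congr rfl fun j _ => ?_
  rw [P_eq hJK a (W j), mul_comm]

set_option linter.unusedSectionVars false in
theorem GI_eq : Matrix.of (GI K) = K * K.transpose := by
  ext a b; simp [GI, Matrix.mul_apply]

theorem contr_ten (hJK : jac P X * K = 1) (W : Fin n → A) :
    ∑ a, ∑ b, GI K a b * ten P X W a b = ∑ i, fr P K i (W i) := by
  have hr : ∀ a, ∑ b, GI K a b * ten P X W a b = ∑ k, K a k * P a (W k) :=
    fun a => contr1 hJK (fun k => P a (W k)) a
  simp only [hr, fr_apply]
  exact Finset.sum_comm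

/-- The contraction `(∇_e w_c) (∇_b z_a) g^{cb} g^{ea}`, computed as the trace of a product of
matrices in which each `J` cancels against a `K`. -/
theorem contr_ten2 (hJK : jac P X * K = 1) (W Z : Fin n → A) :
    ∑ e, ∑ c, ∑ a, ∑ b, GI K c b * GI K e a * ten P X W e c * ten P X Z b a
      = ∑ i, ∑ j, fr P K i (W j) * fr P K j (Z i) := by
  have h1 : ∑ e, ∑ c, ∑ a, ∑ b, GI K c b * GI K e a * ten P X W e c * ten P X Z b a
    = Matrix.trace (ten P X W * Matrix.of (GI K) * ten P X Z * Matrix.of (GI K)) := by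
    simp only [Matrix.trace, Matrix.diag, Matrix.mul_apply, Finset.sum_mul, Matrix.of_apply]
    refine Finset.sum_congr rfl fun e _ => ?_
    rw [Finset.sum_comm]
    refine Finset.sum_congr rfl fun a _ => ?_
    rw [Finset.sum_comm]
    refine Finset.sum_congr rfl fun b _ => ?_
    refine Finset.sum_congr rfl fun c _ => ?_
    rw [GI_symm e a]; ring
  have hT : K.transpose * (jac P X).transpose = 1 := by
    rw [← Matrix.transpose_mul, hJK, Matrix.transpose_one]
  rw [h1, GI_eq, ten_eq hJK, ten_eq hJK]
  set M := Matrix.of fun i j => fr P K i (W j) with hM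
  set N := Matrix.of fun i j => fr P K i (Z j) with hN
  have : (jac P X).transpose * M * jac P X * (K * K.transpose) * ((jac P X).transpose * N * jac P X) * (K * K.transpose)
    = (jac P X).transpose * (M * (jac P X * K) * (K.transpose * (jac P X).transpose) * N * (jac P X * K) * K.transpose) := by
    simp only [Matrix.mul_assoc]
  rw [this, hJK, hT, Matrix.trace_mul_comm]
  simp only [Matrix.mul_one, Matrix.mul_assoc, hT]
  simp [Matrix.trace, Matrix.mul_apply, hM, hN]

/-- Twice the Christoffel symbol of `JᵀJ` computed from the metric; the factor `1/2` of the
definition is left out. -/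
theorem christoffel_eq (hJK : jac P X * K = 1) (hP : ∀ a b f, P a (P b f) = P b (P a f)) (c a b : Fin n) :
    ∑ d, GI K c d * (P a (∑ i, P b (X i) * P d (X i)) + P b (∑ i, P a (X i) * P d (X i))
      - P d (∑ i, P a (X i) * P b (X i))) = 2 * ∑ i, K c i * P a (P b (X i)) := by
  rw [← contr1 hJK, Finset.mul_sum]
  refine Finset.sum_congr rfl fun d _ => ?_
  rw [mul_left_comm]
  congr 1
  simp only [map_sum, Derivation.leibniz, smul_eq_mul, Finset.mul_sum, ← Finset.sum_add_distrib, ← Finset.sum_sub_distrib]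
  refine Finset.sum_congr rfl fun i _ => ?_
  rw [hP b a, hP b d, hP a d]; ring

/-- The Christoffel symbols `Γ^c_{ab} = K^c_i ∂_a ∂_b x^i` of the flat metric `JᵀJ`. -/
def Ga (P : Fin n → Derivation ℝ A A) (X : Fin n → A) (K : Matrix (Fin n) (Fin n) A) (c a b : Fin n) : A := ∑ i, K c i * P a (P b (X i))

theorem Ga_J (hJK : jac P X * K = 1) (a b : Fin n) (W : Fin n → A) :
    ∑ e, Ga P X K e a b * ∑ j, P e (X j) * W j = ∑ j, P a (P b (X j)) * W j := by
  have : ∀ e, Ga P X K e a b * ∑ j, P e (X j) * W j = ∑ i, P a (P b (X i)) * (K e i * ∑ j, P e (X j) * W j) := by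
    intro e
    rw [Ga, Finset.sum_mul]
    exact Finset.sum_congr rfl fun i _ => by ring
  simp only [this]
  rw [Finset.sum_comm]
  refine Finset.sum_congr rfl fun i _ => ?_
  rw [← Finset.mul_sum]
  congr 1
  simp only [Finset.mul_sum, ← mul_assoc]
  rw [Finset.sum_comm]
  simp only [← Finset.sum_mul, mul_comm (K _ _), JK_sum hJK]
  simp

/-- The covariant derivative of the one-form `J^j_b W_j`: the frame is parallel. -/
theorem cov1 (hJK : jac P X * K = 1) (W : Fin n → A) (a b : Fin n) :
    P a (∑ j, P b (X j) * W j) - ∑ e, Ga P X K e a b * ∑ j, P e (X j) * W j = ten P X W a b := by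
  rw [Ga_J hJK]
  simp only [ten, Matrix.of_apply, map_sum, Derivation.leibniz, smul_eq_mul,
    ← Finset.sum_sub_distrib]
  exact Finset.sum_congr rfl fun j _ => by ring

/-- The second covariant derivative of the one-form `J^j_c W_j`. -/
theorem cov2 (hJK : jac P X * K = 1) (W : Fin n → A) (a b c : Fin n) :
    P a (ten P X W b c) - ∑ e, Ga P X K e a b * ten P X W e c
        - ∑ e, Ga P X K e a c * ten P X W b e
      = ∑ j, P c (X j) * ten P X (fun i => fr P K i (W j)) a b := by
  have h3 : ∑ e, Ga P X K e a c * ten P X W b e = ∑ j, P a (P c (X j)) * P b (W j) :=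
    Ga_J hJK a c fun j => P b (W j)
  have h2 : ∑ e, Ga P X K e a b * ten P X W e c
      = ∑ j, P c (X j) * ∑ e, Ga P X K e a b * P e (W j) := by
    simp only [ten, Matrix.of_apply, Finset.mul_sum]
    rw [Finset.sum_comm]
    exact Finset.sum_congr rfl fun j _ => Finset.sum_congr rfl fun e _ => by ring
  have h1 : ∀ j, ten P X (fun i => fr P K i (W j)) a b
      = P a (P b (W j)) - ∑ e, Ga P X K e a b * P e (W j) := by
    intro j
    have := cov1 hJK (fun i => fr P K i (W j)) a b
    simp only [← P_eq hJK] at this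
    exact this.symm
  rw [h3, h2]
  simp only [h1]
  simp only [ten, Matrix.of_apply, map_sum, Derivation.leibniz, smul_eq_mul,
    ← Finset.sum_sub_distrib]
  exact Finset.sum_congr rfl fun j _ => by ring

/-- The contraction `(Δw^e) ∇_e T`. -/
theorem contr_three (hJK : jac P X * K = 1) (W : Fin n → A) (T : A) :
    ∑ e, (∑ c, ∑ d, ∑ f, GI K c d * GI K e f *
        ∑ j, P f (X j) * ten P X (fun i => fr P K i (W j)) c d) * P e T
      = ∑ k, (∑ i, fr P K i (fr P K i (W k))) * fr P K k T := by
  have h1 : ∀ e c d, ∑ f, GI K c d * GI K e f *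
        ∑ j, P f (X j) * ten P X (fun i => fr P K i (W j)) c d
      = ∑ j, K e j * (GI K c d * ten P X (fun i => fr P K i (W j)) c d) := by
    intro e c d
    simp only [mul_assoc, ← Finset.mul_sum]
    rw [contr1 hJK, Finset.mul_sum]
    exact Finset.sum_congr rfl fun j _ => by ring
  have h2 : ∀ e, ∑ c, ∑ d, ∑ f, GI K c d * GI K e f *
        ∑ j, P f (X j) * ten P X (fun i => fr P K i (W j)) c d
      = ∑ j, K e j * ∑ i, fr P K i (fr P K i (W j)) := by
    intro e
    simp only [h1]
    simp only [← contr_ten hJK, Finset.mul_sum]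
    rw [Finset.sum_comm_cycle]
  simp only [h2, Finset.sum_mul]
  rw [Finset.sum_comm]
  refine Finset.sum_congr rfl fun k _ => ?_
  rw [← Finset.sum_mul, fr_apply P K k T, Finset.mul_sum]
  exact Finset.sum_congr rfl fun e _ => by ring

/-- The contraction of `contr_ten2` with the summation indices in another order. -/
theorem contr_hess (hJK : jac P X * K = 1) (W Z : Fin n → A) :
    ∑ a, ∑ b, ∑ e, ∑ f, GI K a b * GI K e f * ten P X W e a * ten P X Z b f
      = ∑ i, ∑ j, fr P K i (W j) * fr P K j (Z i) := by
  rw [← contr_ten2 hJK]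
  refine Eq.trans (Finset.sum_congr rfl fun a _ => ?_) Finset.sum_comm
  refine Finset.sum_comm.trans (Finset.sum_congr rfl fun e _ => ?_)
  exact Finset.sum_comm

/-- The momentum equation in the frame: `D V_j = -T ∂_j p`. -/
theorem mom (hJK : jac P X * K = 1) (hDP : ∀ a f, D (P a f) = P a (D f)) {T p : A}
    (h : ∀ a, D (∑ j, P a (X j) * D (X j)) + T * P a p =
      ∑ c, ∑ d, ten P X (fun j => D (X j)) a c * GI K c d * ∑ j, P d (X j) * D (X j)) (j : Fin n) :
    D (D (X j)) = - (T * fr P K j p) := by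
  have h1 : ∀ a, ∑ i, P a (X i) * D (D (X i)) + T * P a p = 0 := by
    intro a
    -- `(∇_a u_c) u^c = (∂_a V_j) V_j`, which cancels `(D J^j_a) V_j`.
    have h2 : ∑ c, ∑ d, ten P X (fun j => D (X j)) a c * GI K c d * ∑ j, P d (X j) * D (X j)
        = ∑ j, P a (D (X j)) * D (X j) := by
      simp only [mul_assoc, ← Finset.mul_sum]
      simp only [contr1 hJK]
      simp only [Finset.mul_sum]
      rw [Finset.sum_comm]
      refine Finset.sum_congr rfl fun k _ => ?_
      simp only [← mul_assoc, ← Finset.sum_mul]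
      congr 1
      simp only [ten, Matrix.of_apply, Finset.sum_mul]
      rw [Finset.sum_comm]
      have : ∀ i, ∑ c, P c (X i) * P a (D (X i)) * K c k
          = (if i = k then 1 else 0) * P a (D (X i)) := by
        intro i
        rw [← JK_sum hJK, Finset.sum_mul]
        exact Finset.sum_congr rfl fun c _ => by ring
      simp [this]
    have h3 := h a
    rw [h2] at h3
    simp only [map_sum, Derivation.leibniz, smul_eq_mul, Finset.sum_add_distrib, hDP] at h3
    simp only [mul_comm (D (X _))] at h3
    linear_combination h3
  have h4 : ∑ a, K a j * (∑ i, P a (X i) * D (D (X i)) + T * P a p) = 0 := by simp [h1]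
  have h5 : ∑ a, K a j * ∑ i, P a (X i) * D (D (X i)) = D (D (X j)) := by
    simp only [Finset.mul_sum, ← mul_assoc]
    rw [Finset.sum_comm]
    simp only [mul_comm (K _ _), JK_sum hJK, ← Finset.sum_mul]
    simp
  simp only [mul_add, Finset.sum_add_distrib, h5] at h4
  rw [fr_apply, Finset.mul_sum]
  rw [eq_neg_iff_add_eq_zero, ← h4]
  congr 1
  exact Finset.sum_congr rfl fun a _ => by ring

/-! ### The algebraic identities under a homomorphism to `ℝ` -/

theorem cov2_map (φ : A →+* ℝ) (hJK : jac P X * K = 1) (W : Fin n → A) (a b c : Fin n) :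
    φ (P a (ten P X W b c)) - ∑ e, φ (Ga P X K e a b) * φ (ten P X W e c)
        - ∑ e, φ (Ga P X K e a c) * φ (ten P X W b e)
      = φ (∑ j, P c (X j) * ten P X (fun i => fr P K i (W j)) a b) := by
  rw [← cov2 hJK]
  simp only [map_sub φ, map_sum φ, map_mul φ]

theorem D_div_map (φ : A →+* ℝ) (hJK : jac P X * K = 1) (hDP : ∀ a f, D (P a f) = P a (D f))
    {T p : A} (hm : ∀ j, D (D (X j)) = - (T * fr P K j p)) :
    φ (D (∑ j, fr P K j (D (X j)))) + φ T * φ (∑ j, fr P K j (fr P K j p)) =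
      -(∑ a, ∑ b, φ (GI K a b) * φ (P a T) * φ (P b p)) -
        ∑ e, ∑ c, ∑ a, ∑ b, φ (GI K c b) * φ (GI K e a) *
          φ (ten P X (fun j => D (X j)) e c) * φ (ten P X (fun j => D (X j)) b a) := by
  have h := congrArg φ (D_div hJK hDP hm)
  rw [← contr_vec hJK, ← contr_ten2 hJK, map_add φ, map_mul φ, map_sub φ, map_neg φ] at h
  rw [h]
  simp only [map_sum φ, map_mul φ]

theorem D_lap_map (φ : A →+* ℝ) (hJK : jac P X * K = 1) (hDP : ∀ a f, D (P a f) = P a (D f))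
    (hP : ∀ a b f, P a (P b f) = P b (P a f)) {T δ : A}
    (hδ : δ = ∑ j, fr P K j (fr P K j T)) (hT : D T = T * δ) :
    φ (D δ) - φ T * φ (∑ j, fr P K j (fr P K j δ)) =
      -(∑ e, (∑ c, ∑ d, ∑ f, φ (GI K c d) * φ (GI K e f) *
          φ (∑ j, P f (X j) * ten P X (fun i => fr P K i (D (X j))) c d)) * φ (P e T)) -
        2 * (∑ a, ∑ b, ∑ e, ∑ f, φ (GI K a b) * φ (GI K e f) *
          φ (ten P X (fun j => fr P K j T) e a) * φ (ten P X (fun j => D (X j)) b f)) +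
        φ δ ^ 2 + 2 * ∑ a, ∑ b, φ (GI K a b) * φ (P a T) * φ (P b δ) := by
  have h := congrArg φ (D_lap hJK hDP hP hδ hT)
  rw [← contr_three hJK, ← contr_hess hJK, ← contr_vec hJK] at h
  simp only [map_add φ, map_sub φ, map_neg φ, map_mul φ, map_pow φ, map_ofNat φ] at h
  rw [h]
  simp only [map_sum φ, map_mul φ]

theorem mom_map (φ : A →+* ℝ) {T p : A} {a : Fin n}
    (h : φ (D (∑ j, P a (X j) * D (X j))) + φ T * φ (P a p) =
      ∑ c, ∑ d, φ (ten P X (fun j => D (X j)) a c) * φ (GI K c d) *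
        φ (∑ j, P d (X j) * D (X j))) :
    φ (D (∑ j, P a (X j) * D (X j)) + T * P a p) =
      φ (∑ c, ∑ d, ten P X (fun j => D (X j)) a c * GI K c d * ∑ j, P d (X j) * D (X j)) := by
  rw [map_add φ, map_mul φ, h]
  simp only [map_sum φ, map_mul φ]
end

/-! ### The algebra of smooth functions -/

section
/-- The smooth real functions of `(t, y)`, as a subalgebra of all functions. -/
def smoothSub (n : ℕ) : Subalgebra ℝ (ℝ × (Fin n → ℝ) → ℝ) where
  carrier := {f | ContDiff ℝ (⊤ : ℕ∞) f}
  mul_mem' := fun {f g} (ha : ContDiff ℝ (⊤ : ℕ∞) f) (hb : ContDiff ℝ (⊤ : ℕ∞) g) => ha.mul hb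
  add_mem' := fun {f g} (ha : ContDiff ℝ (⊤ : ℕ∞) f) (hb : ContDiff ℝ (⊤ : ℕ∞) g) => ha.add hb
  algebraMap_mem' := fun r => (contDiff_const : ContDiff ℝ (⊤ : ℕ∞) fun _ : ℝ × (Fin n → ℝ) => r)

/-- The algebra of smooth functions of `(t, y)`. It is a type of its own, with its own ring and algebra
instances, so that unification does not unfold the subalgebra structure. -/
def Sm (n : ℕ) : Type := smoothSub n

instance (n : ℕ) : CommRing (Sm n) := inferInstanceAs (CommRing (smoothSub n))

instance (n : ℕ) : Algebra ℝ (Sm n) := inferInstanceAs (Algebra ℝ (smoothSub n))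

variable {n : ℕ}

/-- Evaluation at the spacetime point `q`. -/
def ev (q : ℝ × (Fin n → ℝ)) : Sm n →+* ℝ :=
  (Pi.evalRingHom (fun _ : ℝ × (Fin n → ℝ) => ℝ) q).comp (smoothSub n).val.toRingHom

theorem Sm_ext {F G : Sm n} (h : ∀ q, ev q F = ev q G) : F = G := Subtype.ext (funext h)

theorem Sm_cd (F : Sm n) : ContDiff ℝ (⊤ : ℕ∞) F.1 := F.2

theorem Sm_diff (F : Sm n) : Differentiable ℝ F.1 :=
  ContDiff.differentiable (Sm_cd F) (by simp)

/-- Differentiation in the constant spacetime direction `w`. -/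
def dirD (w : ℝ × (Fin n → ℝ)) : Derivation ℝ (Sm n) (Sm n) :=
  Derivation.mk'
    { toFun := fun F => ⟨fun q => fderiv ℝ F.1 q w,
        (ContDiff.fderiv_right (m := (⊤ : ℕ∞)) (Sm_cd F) le_rfl).clm_apply contDiff_const⟩
      map_add' := fun F G => by
        refine Sm_ext fun q => ?_
        exact congrArg (fun L => L w) (fderiv_add (Sm_diff F q) (Sm_diff G q))
      map_smul' := fun r F => by
        refine Sm_ext fun q => ?_
        exact congrArg (fun L => L w) (fderiv_const_smul (Sm_diff F q) r) }
    (fun F G => by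
      refine Sm_ext fun q => ?_
      exact congrArg (fun L => L w) (fderiv_mul (Sm_diff F q) (Sm_diff G q)))

theorem ev_dirD (w q : ℝ × (Fin n → ℝ)) (F : Sm n) : ev q (dirD w F) = fderiv ℝ F.1 q w := rfl

theorem dirD_comm (w w' : ℝ × (Fin n → ℝ)) (F : Sm n) :
    dirD w (dirD w' F) = dirD w' (dirD w F) := by
  have e : ∀ w w' q, ev q (dirD w (dirD w' F)) = fderiv ℝ (fderiv ℝ F.1) q w w' := by
    intro w w' q
    have hd : DifferentiableAt ℝ (fderiv ℝ F.1) q :=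
      (ContDiff.fderiv_right (m := (⊤ : ℕ∞)) (Sm_cd F) le_rfl).differentiable (by simp) q
    have : fderiv ℝ (fun q => fderiv ℝ F.1 q w') q = _ :=
      (hd.hasFDerivAt.clm_apply (hasFDerivAt_const w' q)).fderiv
    rw [ev_dirD]
    change fderiv ℝ (fun q => fderiv ℝ F.1 q w') q w = _
    rw [this]; simp
  refine Sm_ext fun q => ?_
  rw [e, e]
  exact (ContDiff.contDiffAt (Sm_cd F)).isSymmSndFDerivAt (by simp [minSmoothness_of_isRCLikeNormedField]; exact WithTop.coe_le_coe.mpr le_top) _ _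

/-- The spatial partial derivative `∂_a` at fixed `t`. -/
def PY (a : Fin n) : Derivation ℝ (Sm n) (Sm n) := dirD (0, Pi.single a 1)
/-- The material derivative: in Lagrangian coordinates, the `t`-derivative at fixed `y`. -/
def DT : Derivation ℝ (Sm n) (Sm n) := dirD (1, 0)

theorem pd_ev (F : Sm n) (t : ℝ) (y : Fin n → ℝ) (a : Fin n) :
    pd a (fun z => ev (t, z) F) y = ev (t, y) (PY a F) := by
  have h : HasFDerivAt (fun z => F.1 (t, z)) _ y :=
    (Sm_diff F (t, y)).hasFDerivAt.comp y (hasFDerivAt_prodMk_right t y)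
  exact congrArg (fun L => L (Pi.single a 1)) h.fderiv

theorem deriv_ev (F : Sm n) (t : ℝ) (y : Fin n → ℝ) :
    deriv (fun s => ev (s, y) F) t = ev (t, y) (DT F) := by
  have h : HasDerivAt (fun s => F.1 (s, y)) _ t :=
    ((Sm_diff F (t, y)).hasFDerivAt.comp t (hasFDerivAt_prodMk_left t y)).hasDerivAt
  exact h.deriv

theorem Sm_isUnit (F : Sm n) (h : ∀ q, ev q F ≠ 0) : IsUnit F :=
  isUnit_iff_exists_inv.mpr ⟨⟨(F.1)⁻¹, ContDiff.inv (Sm_cd F) h⟩,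
    Sm_ext fun q => mul_inv_cancel₀ (h q)⟩

theorem ev_mk {f : ℝ × (Fin n → ℝ) → ℝ} (hf : ContDiff ℝ (⊤ : ℕ∞) f) (q : ℝ × (Fin n → ℝ)) :
    f q = ev q ⟨f, hf⟩ := rfl

theorem PY_comm (a b : Fin n) (F : Sm n) : PY a (PY b F) = PY b (PY a F) := dirD_comm _ _ F

theorem DT_PY (a : Fin n) (F : Sm n) : DT (PY a F) = PY a (DT F) := dirD_comm _ _ F
end

attribute [irreducible] ev PY DT

/-! ### The coordinate expressions as values of elements of `Sm n` -/

section
variable {n : ℕ} {x v : ℝ → (Fin n → ℝ) → (Fin n → ℝ)} {X : Fin n → Sm n}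
  {K : Matrix (Fin n) (Fin n) (Sm n)}

theorem pd_of_eq {f : (Fin n → ℝ) → ℝ} {F : Sm n} {t : ℝ} (h : ∀ z, f z = ev (t, z) F)
    (y : Fin n → ℝ) (a : Fin n) : pd a f y = ev (t, y) (PY a F) := by
  rw [← pd_ev, funext h]

theorem gmat_ev (hX : ∀ t y i, x t y i = ev (t, y) (X i)) (t : ℝ) (y : Fin n → ℝ)
    (a b : Fin n) : gmat x t y a b = ev (t, y) (∑ i, PY a (X i) * PY b (X i)) := by
  simp only [gmat, Matrix.of_apply, map_sum, map_mul]
  exact Finset.sum_congr rfl fun i _ => by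
    rw [pd_of_eq (fun z => hX t z i), pd_of_eq (fun z => hX t z i)]

theorem gmat_eq_map (hX : ∀ t y i, x t y i = ev (t, y) (X i)) (t : ℝ) (y : Fin n → ℝ) :
    gmat x t y = (ev (t, y)).mapMatrix ((jac PY X).transpose * jac PY X) := by
  ext a b
  rw [gmat_ev hX]
  simp [Matrix.mul_apply, jac]

/-- The Jacobian is invertible over `Sm n`: `det g = (det J)²` vanishes nowhere, and a nowhere vanishing
smooth function is a unit. -/
theorem exists_inverse (hX : ∀ t y i, x t y i = ev (t, y) (X i))
    (hdet : ∀ t y, IsUnit (gmat x t y).det) : ∃ K, jac PY X * K = 1 := by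
  refine ⟨(jac PY X)⁻¹, Matrix.mul_nonsing_inv _ (Sm_isUnit _ fun q h0 => ?_)⟩
  have := (hdet q.1 q.2).ne_zero
  rw [gmat_eq_map hX, ← RingHom.map_det, Matrix.det_mul, map_mul, h0, mul_zero] at this
  exact this rfl

theorem ginv_ev (hX : ∀ t y i, x t y i = ev (t, y) (X i)) (hJK : jac PY X * K = 1) (t : ℝ)
    (y : Fin n → ℝ) (a b : Fin n) : (gmat x t y)⁻¹ a b = ev (t, y) (GI K a b) := by
  have hT : (jac PY X).transpose * K.transpose = 1 := by
    rw [← Matrix.transpose_mul, mul_eq_one_comm.mp hJK, Matrix.transpose_one]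
  have h : gmat x t y * (ev (t, y)).mapMatrix (Matrix.of (GI K)) = 1 := by
    rw [gmat_eq_map hX, ← map_mul, GI_eq, Matrix.mul_assoc, ← Matrix.mul_assoc (jac PY X), hJK,
      Matrix.one_mul, hT, map_one]
  rw [Matrix.inv_eq_right_inv h]
  rfl

theorem Gamma_ev (hX : ∀ t y i, x t y i = ev (t, y) (X i)) (hJK : jac PY X * K = 1) (t : ℝ)
    (y : Fin n → ℝ) (c a b : Fin n) :
    Gamma (gmat x) t y c a b = ev (t, y) (Ga PY X K c a b) := by
  have h := congrArg (ev (t, y)) (christoffel_eq hJK PY_comm c a b)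
  simp only [Gamma, ginv_ev hX hJK, pd_of_eq (fun z => gmat_ev hX t z _ _), ← map_sub,
    ← map_add, ← map_mul, ← map_sum, h]
  rw [map_mul, map_ofNat, Ga]
  ring

theorem covD_scal {g : ℝ → (Fin n → ℝ) → Matrix (Fin n) (Fin n) ℝ} {f : (Fin n → ℝ) → ℝ}
    {F : Sm n} {t : ℝ} (h : ∀ z, f z = ev (t, z) F) (y : Fin n → ℝ) (J : Fin 1 → Fin n) :
    covD g t (scalT f) y J = ev (t, y) (PY (J 0) F) := by
  simp [covD, scalT, pd_of_eq h]

theorem covD_one (hX : ∀ t y i, x t y i = ev (t, y) (X i)) (hJK : jac PY X * K = 1) {t : ℝ}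
    {w : Tens n 1} {W : Fin n → Sm n}
    (h : ∀ z I, w z I = ev (t, z) (∑ j, PY (I 0) (X j) * W j)) (y : Fin n → ℝ)
    (J : Fin 2 → Fin n) :
    covD (gmat x) t w y J = ev (t, y) (ten PY X W (J 0) (J 1)) := by
  have hpd : pd (J 0) (fun z => w z (Fin.tail J)) y
      = ev (t, y) (PY (J 0) (∑ j, PY (J 1) (X j) * W j)) :=
    pd_of_eq (fun z => h z (Fin.tail J)) y (J 0)
  rw [← cov1 hJK, covD, hpd, map_sub (ev (t, y)), Fin.sum_univ_one]
  congr 1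
  rw [map_sum (ev (t, y))]
  refine Finset.sum_congr rfl fun e _ => ?_
  rw [map_mul (ev (t, y)), Gamma_ev hX hJK, h, Function.update_apply, if_pos rfl]
  rfl

theorem covD_two (hX : ∀ t y i, x t y i = ev (t, y) (X i)) (hJK : jac PY X * K = 1) {t : ℝ}
    {w : Tens n 2} {W : Fin n → Sm n}
    (h : ∀ z I, w z I = ev (t, z) (ten PY X W (I 0) (I 1))) (y : Fin n → ℝ)
    (J : Fin 3 → Fin n) :
    covD (gmat x) t w y J =
      ev (t, y) (∑ j, PY (J 2) (X j) * ten PY X (fun i => fr PY K i (W j)) (J 0) (J 1)) := by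
  have hpd : pd (J 0) (fun z => w z (Fin.tail J)) y
      = ev (t, y) (PY (J 0) (ten PY X W (J 1) (J 2))) :=
    pd_of_eq (fun z => h z (Fin.tail J)) y (J 0)
  rw [← cov2_map (ev (t, y)) hJK, covD, hpd, Fin.sum_univ_two, ← sub_sub]
  congr 1
  · congr 1
    refine Finset.sum_congr rfl fun e _ => ?_
    rw [Gamma_ev hX hJK, h, Function.update_apply, if_pos rfl,
      Function.update_apply, if_neg (by decide)]
    rfl
  · refine Finset.sum_congr rfl fun e _ => ?_
    rw [Gamma_ev hX hJK, h, Function.update_apply, if_neg (by decide),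
      Function.update_apply, if_pos rfl]
    rfl

/-- The Hessian `∇_a ∇_b f`. -/
theorem hess_ev (hX : ∀ t y i, x t y i = ev (t, y) (X i)) (hJK : jac PY X * K = 1) {t : ℝ}
    {f : (Fin n → ℝ) → ℝ} {F : Sm n} (h : ∀ z, f z = ev (t, z) F) (y : Fin n → ℝ)
    (J : Fin 2 → Fin n) :
    covD (gmat x) t (covD (gmat x) t (scalT f)) y J =
      ev (t, y) (ten PY X (fun j => fr PY K j F) (J 0) (J 1)) :=
  covD_one hX hJK (fun z I => by rw [covD_scal h, ← P_eq hJK]) y J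

theorem lapB_ev (hX : ∀ t y i, x t y i = ev (t, y) (X i)) (hJK : jac PY X * K = 1) {t : ℝ}
    {f : (Fin n → ℝ) → ℝ} {F : Sm n} (h : ∀ z, f z = ev (t, z) F) (y : Fin n → ℝ) :
    lapB (gmat x) t f y = ev (t, y) (∑ i, fr PY K i (fr PY K i F)) := by
  rw [← contr_ten hJK]
  simp [lapB, ginv_ev hX hJK, hess_ev hX hJK h]

theorem uLag_ev (hX : ∀ t y i, x t y i = ev (t, y) (X i))
    (hV : ∀ t y i, v t (x t y) i = ev (t, y) (DT (X i))) (t : ℝ) (y : Fin n → ℝ) (a : Fin n) :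
    uLag x v t y a = ev (t, y) (∑ j, PY a (X j) * DT (X j)) := by
  simp only [uLag, hV, pd_of_eq (fun z => hX t z _), map_sum, map_mul]

/-- The tensor `∇_a u_b`. -/
theorem gradu_ev (hX : ∀ t y i, x t y i = ev (t, y) (X i)) (hJK : jac PY X * K = 1)
    (hV : ∀ t y i, v t (x t y) i = ev (t, y) (DT (X i))) (t : ℝ) (y : Fin n → ℝ)
    (J : Fin 2 → Fin n) :
    covD (gmat x) t (uT x v t) y J = ev (t, y) (ten PY X (fun j => DT (X j)) (J 0) (J 1)) :=
  covD_one hX hJK (fun z I => uLag_ev hX hV t z (I 0)) y J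

theorem divu_ev (hX : ∀ t y i, x t y i = ev (t, y) (X i)) (hJK : jac PY X * K = 1)
    (hV : ∀ t y i, v t (x t y) i = ev (t, y) (DT (X i))) (t : ℝ) (y : Fin n → ℝ) :
    divu x v t y = ev (t, y) (∑ i, fr PY K i (DT (X i))) := by
  rw [← contr_ten hJK]
  simp [divu, ginv_ev hX hJK, gradu_ev hX hJK hV]
end

/-- for a smooth solution of `D_t u + 𝒯∇p = (∇u)·u`, `div u = Δ𝒯`,
`D_t 𝒯 = 𝒯Δ𝒯` in Lagrangian coordinates, one has
`D_t(div u) + 𝒯Δp = -(∇𝒯)·∇p - (∇_e u)·∇u^e` and the parabolic-type equation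
`D_t(div u) - 𝒯Δ(div u)
  = -(Δu^e)∇_e𝒯 - 2g^{ab}(∇_e∇_a𝒯)∇_b u^e + (div u)² + 2g^{ab}(∇_a𝒯)∇_b(div u)`. -/
theorem stmt13 {n : ℕ} (x v : ℝ → (Fin n → ℝ) → (Fin n → ℝ))
    (𝒯 p : ℝ → (Fin n → ℝ) → ℝ)
    (hx : ContDiff ℝ (⊤ : ℕ∞) (fun q : ℝ × (Fin n → ℝ) => x q.1 q.2))
    (hv : ContDiff ℝ (⊤ : ℕ∞) (fun q : ℝ × (Fin n → ℝ) => v q.1 q.2))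
    (h𝒯 : ContDiff ℝ (⊤ : ℕ∞) (fun q : ℝ × (Fin n → ℝ) => 𝒯 q.1 q.2))
    (hp : ContDiff ℝ (⊤ : ℕ∞) (fun q : ℝ × (Fin n → ℝ) => p q.1 q.2))
    (hflow : ∀ t y, HasDerivAt (fun s => x s y) (v t (x t y)) t)
    (hdet : ∀ t y, IsUnit (gmat x t y).det)
    (hmom : ∀ t y (a : Fin n),
      deriv (fun s => uLag x v s y a) t +
          𝒯 t y * covD (gmat x) t (scalT (p t)) y ![a] =
        ∑ c, ∑ d, covD (gmat x) t (uT x v t) y ![a, c] *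
          (gmat x t y)⁻¹ c d * uLag x v t y d)
    (hdiv : ∀ t y, divu x v t y = lapB (gmat x) t (𝒯 t) y)
    (hheat : ∀ t y, deriv (fun s => 𝒯 s y) t = 𝒯 t y * lapB (gmat x) t (𝒯 t) y) :
    ∀ t (y : Fin n → ℝ),
      (deriv (fun s => divu x v s y) t + 𝒯 t y * lapB (gmat x) t (p t) y =
        -(∑ a, ∑ b, (gmat x t y)⁻¹ a b *
            covD (gmat x) t (scalT (𝒯 t)) y ![a] *
            covD (gmat x) t (scalT (p t)) y ![b]) -
          ∑ e, ∑ c, ∑ a, ∑ b, (gmat x t y)⁻¹ c b * (gmat x t y)⁻¹ e a *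
            covD (gmat x) t (uT x v t) y ![e, c] *
            covD (gmat x) t (uT x v t) y ![b, a]) ∧
      (deriv (fun s => divu x v s y) t -
          𝒯 t y * lapB (gmat x) t (fun z => divu x v t z) y =
        -(∑ e, (∑ c, ∑ d, ∑ f, (gmat x t y)⁻¹ c d * (gmat x t y)⁻¹ e f *
              covD (gmat x) t (covD (gmat x) t (uT x v t)) y ![c, d, f]) *
            covD (gmat x) t (scalT (𝒯 t)) y ![e]) -
          2 * (∑ a, ∑ b, ∑ e, ∑ f, (gmat x t y)⁻¹ a b * (gmat x t y)⁻¹ e f *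
            covD (gmat x) t (covD (gmat x) t (scalT (𝒯 t))) y ![e, a] *
            covD (gmat x) t (uT x v t) y ![b, f]) +
          (divu x v t y) ^ 2 +
          2 * ∑ a, ∑ b, (gmat x t y)⁻¹ a b *
            covD (gmat x) t (scalT (𝒯 t)) y ![a] *
            covD (gmat x) t (scalT (fun z => divu x v t z)) y ![b]) := by
  let X : Fin n → Sm n := fun i => ⟨fun q => x q.1 q.2 i, contDiff_pi.mp hx i⟩
  let T : Sm n := ⟨fun q => 𝒯 q.1 q.2, h𝒯⟩
  let p' : Sm n := ⟨fun q => p q.1 q.2, hp⟩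
  have hX : ∀ t y i, x t y i = ev (t, y) (X i) := fun t y i => ev_mk (contDiff_pi.mp hx i) (t, y)
  have hT : ∀ t y, 𝒯 t y = ev (t, y) T := fun t y => ev_mk h𝒯 (t, y)
  have hP : ∀ t y, p t y = ev (t, y) p' := fun t y => ev_mk hp (t, y)
  have hV : ∀ t y i, v t (x t y) i = ev (t, y) (DT (X i)) := fun t y i => by
    rw [← deriv_ev, ← funext fun s => hX s y i]
    exact (hasDerivAt_pi.mp (hflow t y) i).deriv.symm
  clear_value X T p'
  obtain ⟨K, hJK⟩ := exists_inverse hX hdet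
  have hDP : ∀ a (F : Sm n), DT (PY a F) = PY a (DT F) := DT_PY
  have hPP : ∀ a b (F : Sm n), PY a (PY b F) = PY b (PY a F) := PY_comm
  have hm : ∀ j, DT (DT (X j)) = -(T * fr PY K j p') := by
    refine mom hJK hDP fun a => Sm_ext fun q => ?_
    refine mom_map (ev q) ?_
    have h := hmom q.1 q.2 a
    rw [hT, covD_scal (hP q.1), funext fun s => uLag_ev hX hV s q.2 a, deriv_ev] at h
    simp only [gradu_ev hX hJK hV, ginv_ev hX hJK, uLag_ev hX hV] at h
    exact h
  have hδ : ∑ i, fr PY K i (DT (X i)) = ∑ i, fr PY K i (fr PY K i T) := Sm_ext fun q => by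
    rw [← divu_ev hX hJK hV q.1 q.2, ← lapB_ev hX hJK (hT q.1), hdiv]
  have hTt : DT T = T * ∑ i, fr PY K i (DT (X i)) := Sm_ext fun q => by
    have h := hheat q.1 q.2
    rw [funext fun s => hT s q.2, deriv_ev, hT, lapB_ev hX hJK (hT q.1), ← hδ, ← map_mul] at h
    exact h
  intro t y
  have hd : ∀ z, divu x v t z = ev (t, z) (∑ i, fr PY K i (DT (X i))) := divu_ev hX hJK hV t
  have hu2 := fun J => covD_two hX hJK (gradu_ev hX hJK hV t) y J
  rw [funext fun s => divu_ev hX hJK hV s y, deriv_ev]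
  constructor
  · refine Eq.trans ?_ ((D_div_map (ev (t, y)) hJK hDP hm).trans ?_)
    · rw [lapB_ev hX hJK (hP t), hT]
    · simp only [covD_scal (hT t), covD_scal (hP t), gradu_ev hX hJK hV, ginv_ev hX hJK]
      rfl
  · refine Eq.trans ?_ ((D_lap_map (ev (t, y)) hJK hDP hPP hδ hTt).trans ?_)
    · rw [lapB_ev hX hJK hd, hT]
    · simp only [covD_scal (hT t), covD_scal hd, gradu_ev hX hJK hV, hu2, hess_ev hX hJK (hT t),
        ginv_ev hX hJK]
      rw [hd]
      rfl
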